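/- arXiv:2405.13801 — 4 statements merged into one kernel-verified Lean document; each statement's English description precedes it below -/
import Mathlib

section
/- Let n ≥ 2 and let y_1, …, y_n ∈ [0,1]. Let ȳ = (1/n)∑_{i=1}^n y_i be the sample mean and s² = (1/(n−1))∑_{i=1}^n (y_i − ȳ)² the sample variance. Then 0 ≤ s² ≤ (n/(n−1))·ȳ(1 − ȳ), and consequently 1/2 − √(1/4 − ((n−1)/n)s²) ≤ ȳ ≤ 1/2 + √(1/4 − ((n−1)/n)s²). -/
open scoped BigOperators

theorem stmt_4 (n : ℕ) (hn : 2 ≤ n) (y : Fin n → ℝ) (hy : ∀ i, y i ∈ Set.Icc (0 : ℝ) 1) :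
    (0 ≤ (∑ i, (y i - (∑ j, y j) / n) ^ 2) / ((n : ℝ) - 1) ∧
      (∑ i, (y i - (∑ j, y j) / n) ^ 2) / ((n : ℝ) - 1)
        ≤ ((n : ℝ) / ((n : ℝ) - 1)) * (((∑ i, y i) / n) * (1 - (∑ i, y i) / n))) ∧
    (1 / 2 - Real.sqrt (1 / 4 - (((n : ℝ) - 1) / n) *
        ((∑ i, (y i - (∑ j, y j) / n) ^ 2) / ((n : ℝ) - 1))) ≤ (∑ i, y i) / n ∧
      (∑ i, y i) / n ≤ 1 / 2 + Real.sqrt (1 / 4 - (((n : ℝ) - 1) / n) *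
        ((∑ i, (y i - (∑ j, y j) / n) ^ 2) / ((n : ℝ) - 1)))) := by
  have hn' : (2 : ℝ) ≤ n := by exact_mod_cast hn
  have h0 : (0 : ℝ) < n := by linarith
  have h1 : (0 : ℝ) < (n : ℝ) - 1 := by linarith
  obtain ⟨m, hm⟩ : ∃ m, m = (∑ j, y j) / (n : ℝ) := ⟨_, rfl⟩
  have hS : ∑ j, y j = n * m := by rw [hm]; field_simp
  rw [← hm]
  have hQ0 : 0 ≤ ∑ i, (y i - m) ^ 2 := Finset.sum_nonneg fun i _ => sq_nonneg _
  have hQ : ∑ i, (y i - m) ^ 2 ≤ n * (m * (1 - m)) := by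
    calc ∑ i, (y i - m) ^ 2 ≤ ∑ i, (y i * (1 - 2 * m) + m ^ 2) := by
          apply Finset.sum_le_sum
          intro i _
          obtain ⟨ha, hb⟩ := hy i
          nlinarith [mul_nonneg ha (sub_nonneg.2 hb)]
      _ = n * (m * (1 - m)) := by
          rw [Finset.sum_add_distrib, ← Finset.sum_mul, hS]
          simp
          ring
  generalize ∑ i, (y i - m) ^ 2 = Q at *
  have e : ((n : ℝ) - 1) / n * (Q / ((n : ℝ) - 1)) = Q / n := by
    field_simp
  have hq : Q / n ≤ m * (1 - m) := by
    rw [div_le_iff₀ h0]; linarith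
  rw [e]
  have habs : |m - 1 / 2| ≤ Real.sqrt (1 / 4 - Q / n) :=
    Real.abs_le_sqrt (by nlinarith)
  obtain ⟨ha, hb⟩ := abs_le.1 habs
  refine ⟨⟨by positivity, ?_⟩, by linarith, by linarith⟩
  rw [div_mul_eq_mul_div]
  exact div_le_div_of_nonneg_right hQ h1.le
end

section
/- Let n ≥ 2 be an integer, ε₁, ε₂ > 0, and fix observed values ȳ* ∈ ℝ and s²* ∈ ℝ. Define the marginal likelihood L(μ, σ²) = [∫_ℝ (ε₁n/2)e^{−ε₁n|ȳ* − ȳ|} · (n/(2πσ²))^{1/2} e^{−n(ȳ − μ)²/(2σ²)} dȳ] · [∫_0^∞ (ε₂n/2)e^{−ε₂n|s²* − s|} · (((n−1)/(2σ²))^{(n−1)/2}/Γ((n−1)/2)) s^{(n−1)/2 − 1} e^{−(n−1)s/(2σ²)} ds] for μ ∈ ℝ, σ² > 0. Then the integral ∫_0^∞ ∫_ℝ L(μ, σ²)·(σ²)^{−1} dμ dσ² diverges (equals +∞). In particular, the posterior distribution under the improper prior p(μ, σ²) ∝ (σ²)^{−1} is not a proper probability distribution. -/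
open MeasureTheory

lemma aux_lower (f : ℝ → ℝ) (T : Set ℝ) (hT : MeasurableSet T) (a b c : ℝ) (hab : a ≤ b)
    (hf : IntegrableOn f T) (h0 : ∀ x ∈ T, 0 ≤ f x) (hsub : Set.Ioc a b ⊆ T)
    (hc : ∀ x ∈ Set.Ioc a b, c ≤ f x) : c * (b - a) ≤ ∫ x in T, f x := by
  have h1 : ∫ x in Set.Ioc a b, f x ≤ ∫ x in T, f x := by
    apply setIntegral_mono_set hf
    · filter_upwards [ae_restrict_mem hT] with x hx using h0 x hx
    · exact hsub.eventuallyLE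
  have h2 : ∫ x in Set.Ioc a b, c ≤ ∫ x in Set.Ioc a b, f x := by
    apply setIntegral_mono_on
    · simp
    · exact hf.mono_set hsub
    · exact measurableSet_Ioc
    · exact hc
  have h3 : ∫ x in Set.Ioc a b, c = c * (b - a) := by
    simp [Measure.real, hab, mul_comm]
  linarith

lemma aux_top (k : ℝ) (hk : 0 < k) :
    (∫⁻ x in Set.Ioo (0:ℝ) 1, ENNReal.ofReal (k * x⁻¹)) = ⊤ := by
  by_contra h
  have hi : IntegrableOn (fun x : ℝ => k * x⁻¹) (Set.Ioo 0 1) := by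
    refine (lintegral_ofReal_ne_top_iff_integrable ?_ ?_).1 h
    · exact (measurable_const.mul measurable_inv).aestronglyMeasurable
    · filter_upwards [ae_restrict_mem measurableSet_Ioo] with x hx
      have := hx.1
      simp only [Pi.zero_apply]; positivity
  have h2 : IntegrableOn (fun x : ℝ => x⁻¹) (Set.Ioo 0 1) := by
    have := hi.const_mul k⁻¹
    refine this.congr (Filter.Eventually.of_forall fun x => ?_)
    simp only; field_simp
  have h3 : IntervalIntegrable (fun x : ℝ => x⁻¹) volume 0 1 := by
    rw [intervalIntegrable_iff_integrableOn_Ioo_of_le zero_le_one]; exact h2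
  simp at h3

lemma aux_A (N e : ℝ) (hN : 0 < N) (he : 0 < e) (y : ℝ) : ∃ c : ℝ, 0 < c ∧
    ∀ μ v : ℝ, μ ∈ Set.Ioo (y-1) (y+1) → v ∈ Set.Ioo (0:ℝ) 1 → c ≤
      ∫ ybar : ℝ, (e * N / 2) * Real.exp (-(e * N) * |y - ybar|) *
          (Real.sqrt (N / (2 * Real.pi * v)) * Real.exp (-(N * (ybar - μ) ^ 2) / (2 * v))) := by
  refine ⟨(e * N / 2) * Real.exp (-(e * N) * 2) *
          (Real.sqrt (N / (2 * Real.pi)) * Real.exp (-N / 2)), by positivity, ?_⟩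
  intro μ v hμ hv
  obtain ⟨hv0, hv1⟩ := hv
  have hs0 : 0 < Real.sqrt v := Real.sqrt_pos.2 hv0
  have hs1 : Real.sqrt v ≤ 1 := Real.sqrt_le_one.2 hv1.le
  have hint : Integrable (fun ybar : ℝ => (e * N / 2) * Real.exp (-(e * N) * |y - ybar|) *
          (Real.sqrt (N / (2 * Real.pi * v)) * Real.exp (-(N * (ybar - μ) ^ 2) / (2 * v)))) := by
    have h1 : Integrable (fun x : ℝ => Real.exp (-(N/(2*v)) * (x - μ)^2)) :=
      (integrable_exp_neg_mul_sq (b := N/(2*v)) (by positivity)).comp_sub_right μ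
    have h2 := h1.const_mul (Real.sqrt (N / (2 * Real.pi * v)))
    refine (h2.bdd_mul (c := e * N / 2) (f := fun ybar : ℝ => (e * N / 2) * Real.exp (-(e * N) * |y - ybar|)) ?_ ?_).congr ?_
    · exact (by fun_prop : Continuous fun ybar : ℝ => (e * N / 2) * Real.exp (-(e * N) * |y - ybar|)).aestronglyMeasurable
    · refine Filter.Eventually.of_forall fun x => ?_
      rw [Real.norm_of_nonneg (by positivity)]
      have : Real.exp (-(e * N) * |y - x|) ≤ 1 := by
        rw [Real.exp_le_one_iff]
        have : 0 ≤ e * N * |y - x| := by positivity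
        linarith
      have h3 : 0 < e * N / 2 := by positivity
      nlinarith
    · refine Filter.Eventually.of_forall fun x => ?_
      simp only
      congr 3
      field_simp
  have key := aux_lower _ Set.univ MeasurableSet.univ μ (μ + Real.sqrt v)
    ((e * N / 2) * Real.exp (-(e * N) * 2) *
          (Real.sqrt (N / (2 * Real.pi * v)) * Real.exp (-N / 2))) (by linarith)
    hint.integrableOn (fun x _ => by positivity) (Set.subset_univ _) (by
      intro x hx
      obtain ⟨hx1, hx2⟩ := hx
      obtain ⟨hm1, hm2⟩ := hμ
      gcongr ?_ * Real.exp ?_ * (_ * Real.exp ?_)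
      · have : |y - x| ≤ 2 := by rw [abs_le]; constructor <;> linarith
        have h3 : 0 < e * N := by positivity
        nlinarith
      · have h4 : (x - μ)^2 ≤ v := by
          rw [← Real.sq_sqrt hv0.le]
          apply pow_le_pow_left₀ <;> linarith
        rw [div_le_div_iff₀ (by norm_num) (by positivity)]
        nlinarith)
  rw [setIntegral_univ] at key
  refine le_trans (le_of_eq ?_) key
  have : Real.sqrt (N / (2 * Real.pi * v)) * Real.sqrt v = Real.sqrt (N / (2 * Real.pi)) := by
    rw [← Real.sqrt_mul (by positivity)]
    congr 1
    field_simp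
  rw [← this]; ring

lemma aux_B (D α e : ℝ) (hD : 0 < D) (hα : 0 < α) (hα2 : D / 2 = α) (he : 0 < e) (N : ℝ) (hN : 0 < N)
    (y : ℝ) : ∃ c : ℝ, 0 < c ∧ ∀ v : ℝ, v ∈ Set.Ioo (0:ℝ) 1 → c ≤
      ∫ s in Set.Ioi (0 : ℝ), (e * N / 2) * Real.exp (-(e * N) * |y - s|) *
          (((D / (2 * v)) ^ α / Real.Gamma α) *
            s ^ (α - 1) * Real.exp (-(D * s) / (2 * v))) := by
  have hG := Real.Gamma_pos_of_pos hα
  refine ⟨(e * N / 2) * Real.exp (-(e * N) * (|y| + 1)) *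
          (((D / 4) ^ α / Real.Gamma α) * Real.exp (-D / 2)) / 2, by positivity, ?_⟩
  rintro v ⟨hv0, hv1⟩
  have hint : IntegrableOn (fun s : ℝ => (e * N / 2) * Real.exp (-(e * N) * |y - s|) *
          (((D / (2 * v)) ^ α / Real.Gamma α) *
            s ^ (α - 1) * Real.exp (-(D * s) / (2 * v)))) (Set.Ioi 0) := by
    have h1 := integrableOn_rpow_mul_exp_neg_mul_rpow (p := 1) (s := α - 1) (b := D/(2*v))
      (by linarith) (by norm_num) (by positivity)
    have h2 := h1.const_mul ((D / (2 * v)) ^ α / Real.Gamma α)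
    refine (h2.bdd_mul (c := e * N / 2) (f := fun s : ℝ => (e * N / 2) * Real.exp (-(e * N) * |y - s|)) ?_ ?_).congr ?_
    · exact (by fun_prop : Continuous fun ybar : ℝ => (e * N / 2) * Real.exp (-(e * N) * |y - ybar|)).aestronglyMeasurable
    · refine Filter.Eventually.of_forall fun x => ?_
      rw [Real.norm_of_nonneg (by positivity)]
      have : Real.exp (-(e * N) * |y - x|) ≤ 1 := by
        rw [Real.exp_le_one_iff]
        have : 0 ≤ e * N * |y - x| := by positivity
        linarith
      have h3 : 0 < e * N / 2 := by positivity
      nlinarith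
    · refine Filter.Eventually.of_forall fun x => ?_
      simp only [Real.rpow_one]
      rw [mul_assoc ((D / (2 * v)) ^ α / Real.Gamma α)]
      congr 4
      field_simp
  have key := aux_lower _ (Set.Ioi 0) measurableSet_Ioi (v/2) v
    ((e * N / 2) * Real.exp (-(e * N) * (|y| + 1)) *
          (((D / (2 * v)) ^ α / Real.Gamma α) * ((v/2)^α / v) * Real.exp (-D / 2))) (by linarith)
    hint (fun x hx => by
      have hx : 0 < x := hx
      positivity) (fun x hx => lt_trans (by positivity) hx.1) (by
      intro x hx
      obtain ⟨hx1, hx2⟩ := hx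
      have hx0 : 0 < x := by linarith
      have e1 : (v/2)^α / v ≤ x ^ (α - 1) := by
        rw [Real.rpow_sub_one hx0.ne']
        gcongr
      have e2 : -(e * N) * (|y| + 1) ≤ -(e * N) * |y - x| := by
        have h5 : |y - x| ≤ |y| + 1 := by
          refine (abs_sub y x).trans ?_
          rw [abs_of_pos hx0]; linarith
        have h3 : 0 < e * N := by positivity
        nlinarith
      have e3 : -D / 2 ≤ -(D * x) / (2 * v) := by
        rw [div_le_div_iff₀ (by norm_num) (by positivity)]
        nlinarith
      gcongr)
  refine le_trans (le_of_eq ?_) key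
  have : (D / (2 * v)) ^ α * (v/2)^α = (D/4)^α := by
    rw [← Real.mul_rpow (by positivity) (by positivity)]
    congr 1
    field_simp
    norm_num
  rw [← this]; field_simp; ring



theorem stmt_5 (n : ℕ) (hn : 2 ≤ n) (ε₁ ε₂ : ℝ) (hε₁ : 0 < ε₁) (hε₂ : 0 < ε₂)
    (ybarStar s2Star : ℝ) (L : ℝ → ℝ → ℝ)
    (hL : ∀ μ σ2 : ℝ, 0 < σ2 → L μ σ2 =
      (∫ ybar : ℝ, (ε₁ * n / 2) * Real.exp (-(ε₁ * n) * |ybarStar - ybar|) *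
          (Real.sqrt ((n : ℝ) / (2 * Real.pi * σ2)) *
            Real.exp (-((n : ℝ) * (ybar - μ) ^ 2) / (2 * σ2)))) *
      (∫ s in Set.Ioi (0 : ℝ), (ε₂ * n / 2) * Real.exp (-(ε₂ * n) * |s2Star - s|) *
          (((((n : ℝ) - 1) / (2 * σ2)) ^ (((n : ℝ) - 1) / 2) / Real.Gamma (((n : ℝ) - 1) / 2)) *
            s ^ (((n : ℝ) - 1) / 2 - 1) * Real.exp (-(((n : ℝ) - 1) * s) / (2 * σ2))))) :
    (∫⁻ σ2 in Set.Ioi (0 : ℝ), ∫⁻ μ : ℝ, ENNReal.ofReal (L μ σ2 * σ2⁻¹)) = ⊤ := by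

  have hn' : (2:ℝ) ≤ n := by exact_mod_cast hn
  obtain ⟨a, ha, hA⟩ := aux_A n ε₁ (by linarith) hε₁ ybarStar
  obtain ⟨b, hb, hB⟩ := aux_B ((n:ℝ) - 1) (((n:ℝ) - 1)/2) ε₂ (by linarith) (by linarith) rfl hε₂ n
    (by linarith) s2Star
  rw [eq_top_iff, ← aux_top (a * b * 2) (by positivity)]
  refine le_trans ?_ (lintegral_mono_set (fun x hx => hx.1 : Set.Ioo (0:ℝ) 1 ⊆ Set.Ioi 0))
  refine setLIntegral_mono' measurableSet_Ioo fun v hv => ?_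
  have hv0 : 0 < v := hv.1
  calc ENNReal.ofReal (a * b * 2 * v⁻¹)
      = ∫⁻ μ in Set.Ioo (ybarStar - 1) (ybarStar + 1), ENNReal.ofReal (a * b * v⁻¹) := by
        rw [setLIntegral_const, Real.volume_Ioo, ← ENNReal.ofReal_mul (by positivity)]
        congr 1; ring
    _ ≤ ∫⁻ μ in Set.Ioo (ybarStar - 1) (ybarStar + 1), ENNReal.ofReal (L μ v * v⁻¹) := by
        refine setLIntegral_mono' measurableSet_Ioo fun μ hμ => ?_
        apply ENNReal.ofReal_le_ofReal
        rw [hL μ v hv0]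
        have h1 := hA μ v hμ hv
        have h2 := hB v hv
        gcongr
    _ ≤ _ := setLIntegral_le_lintegral _ _
end

section
/- Let n > 3 be an integer, ε₁, ε₂ > 0, and fix observed values ȳ* ∈ ℝ and s²* ∈ ℝ. Define the marginal likelihood L(μ, σ²) = [∫_ℝ (ε₁n/2)e^{−ε₁n|ȳ* − ȳ|} · (n/(2πσ²))^{1/2} e^{−n(ȳ − μ)²/(2σ²)} dȳ] · [∫_0^∞ (ε₂n/2)e^{−ε₂n|s²* − s|} · (((n−1)/(2σ²))^{(n−1)/2}/Γ((n−1)/2)) s^{(n−1)/2 − 1} e^{−(n−1)s/(2σ²)} ds] for μ ∈ ℝ, σ² > 0. Then ∫_0^∞ ∫_ℝ L(μ, σ²) dμ dσ² = ((n−1)/(n−3))·(1/2 + (1/2)·sgn(s²*)·(1 − e^{−ε₂n|s²*|})), which is finite. In particular, the posterior distribution under the improper prior p(μ, σ²) ∝ 1 is a proper probability distribution. -/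
open MeasureTheory

noncomputable def lapD (c m y : ℝ) : ℝ := c / 2 * Real.exp (-c * |m - y|)

lemma lapD_pos {c : ℝ} (hc : 0 < c) (m y : ℝ) : 0 < lapD c m y := by
  unfold lapD; positivity

lemma lapD_le {c : ℝ} (hc : 0 < c) (m y : ℝ) : lapD c m y ≤ c / 2 := by
  unfold lapD
  have h : Real.exp (-c * |m - y|) ≤ 1 := by
    rw [Real.exp_le_one_iff]
    have := abs_nonneg (m - y)
    nlinarith
  nlinarith

lemma lapD_cont (c m : ℝ) : Continuous (lapD c m) := by
  unfold lapD; fun_prop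

lemma lapD_Iic_eq {c m t : ℝ} (ht : t ≤ m) :
    Set.EqOn (fun y => (c / 2 * Real.exp (-c * m)) * Real.exp (c * y)) (lapD c m) (Set.Iic t) := by
  intro y hy
  have hy' : y ≤ t := hy
  simp only [lapD]
  rw [abs_of_nonneg (by linarith), mul_assoc, ← Real.exp_add]
  ring_nf

lemma lapD_Ioi_eq {c m t : ℝ} (ht : m ≤ t) :
    Set.EqOn (fun y => (c / 2 * Real.exp (c * m)) * Real.exp (-c * y)) (lapD c m) (Set.Ioi t) := by
  intro y hy
  have hy' : t < y := hy
  simp only [lapD]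
  rw [abs_of_nonpos (by linarith), mul_assoc, ← Real.exp_add]
  ring_nf

lemma lapD_integrable {c : ℝ} (hc : 0 < c) (m : ℝ) : Integrable (lapD c m) := by
  rw [← integrableOn_univ, ← Set.Iic_union_Ioi (a := m)]
  apply IntegrableOn.union
  · exact IntegrableOn.congr_fun ((integrableOn_exp_mul_Iic hc m).const_mul _) (lapD_Iic_eq le_rfl)
      measurableSet_Iic
  · exact IntegrableOn.congr_fun ((integrableOn_exp_mul_Ioi (neg_lt_zero.2 hc) m).const_mul _)
      (lapD_Ioi_eq le_rfl) measurableSet_Ioi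

lemma lapD_Iic {c m t : ℝ} (hc : 0 < c) (ht : t ≤ m) :
    ∫ y in Set.Iic t, lapD c m y = Real.exp (-c * (m - t)) / 2 := by
  rw [← setIntegral_congr_fun measurableSet_Iic (lapD_Iic_eq ht), integral_const_mul,
    integral_exp_mul_Iic hc]
  rw [show -c * (m - t) = -c * m + c * t by ring, Real.exp_add]
  field_simp

lemma lapD_Ioi {c m t : ℝ} (hc : 0 < c) (ht : m ≤ t) :
    ∫ y in Set.Ioi t, lapD c m y = Real.exp (-c * (t - m)) / 2 := by
  rw [← setIntegral_congr_fun measurableSet_Ioi (lapD_Ioi_eq ht), integral_const_mul,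
    integral_exp_mul_Ioi (neg_lt_zero.2 hc)]
  rw [show -c * (t - m) = c * m + -c * t by ring, Real.exp_add]
  field_simp

lemma lapD_integral {c : ℝ} (hc : 0 < c) (m : ℝ) : ∫ y, lapD c m y = 1 := by
  have h := intervalIntegral.integral_Iic_add_Ioi (b := m) (lapD_integrable hc m).integrableOn
    (lapD_integrable hc m).integrableOn
  rw [← h, lapD_Iic hc le_rfl, lapD_Ioi hc le_rfl]
  simp only [sub_self, mul_zero, Real.exp_zero]
  norm_num

lemma lapD_Ioi_zero {c : ℝ} (hc : 0 < c) (m : ℝ) :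
    ∫ y in Set.Ioi 0, lapD c m y
      = 1 / 2 + 1 / 2 * Real.sign m * (1 - Real.exp (-c * |m|)) := by
  rcases lt_trichotomy m 0 with h | h | h
  · rw [lapD_Ioi hc h.le, Real.sign_of_neg h, abs_of_neg h]
    ring_nf
  · subst h
    rw [lapD_Ioi hc le_rfl]; simp
  · have h1 := intervalIntegral.integral_Iic_add_Ioi (b := 0) (lapD_integrable hc m).integrableOn
      (lapD_integrable hc m).integrableOn
    rw [lapD_Iic hc h.le, lapD_integral hc] at h1
    rw [Real.sign_of_pos h, abs_of_pos h]
    rw [sub_zero] at h1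
    linarith

noncomputable def gauD (n σ2 y μ : ℝ) : ℝ :=
  Real.sqrt (n / (2 * Real.pi * σ2)) * Real.exp (-(n * (y - μ) ^ 2) / (2 * σ2))

lemma gauD_nonneg (n σ2 y μ : ℝ) : 0 ≤ gauD n σ2 y μ := by unfold gauD; positivity

lemma gauD_le {n σ2 : ℝ} (hn : 0 < n) (hs : 0 < σ2) (y μ : ℝ) :
    gauD n σ2 y μ ≤ Real.sqrt (n / (2 * Real.pi * σ2)) := by
  unfold gauD
  apply mul_le_of_le_one_right (by positivity)
  rw [Real.exp_le_one_iff]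
  apply div_nonpos_of_nonpos_of_nonneg _ (by positivity)
  have : 0 ≤ n * (y - μ) ^ 2 := by positivity
  linarith

lemma gauD_cont (n σ2 : ℝ) : Continuous (fun p : ℝ × ℝ => gauD n σ2 p.1 p.2) := by
  unfold gauD; fun_prop

lemma gauD_lint {n σ2 : ℝ} (hn : 0 < n) (hs : 0 < σ2) (y : ℝ) :
    ∫⁻ μ, ENNReal.ofReal (gauD n σ2 y μ) = 1 := by
  have hv : 0 < σ2 / n := by positivity
  have hco : ((σ2 / n).toNNReal : ℝ) = σ2 / n := Real.coe_toNNReal _ hv.le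
  have := ProbabilityTheory.lintegral_gaussianPDFReal_eq_one y (v := (σ2 / n).toNNReal)
    (Real.toNNReal_pos.2 hv).ne'
  rw [← this]
  congr 1
  ext μ
  congr 1
  rw [ProbabilityTheory.gaussianPDFReal_def]
  simp only [gauD, hco]
  rw [← Real.sqrt_inv]
  congr 2
  · field_simp
  · rw [show (y - μ) ^ 2 = (μ - y) ^ 2 by ring]
    field_simp

noncomputable def gamD (a σ2 s : ℝ) : ℝ :=
  ((a / σ2) ^ a / Real.Gamma a) * s ^ (a - 1) * Real.exp (-(a * s) / σ2)

lemma gamD_nonneg {a σ2 s : ℝ} (ha : 0 < a) (hσ : 0 < σ2) (hs : 0 < s) : 0 ≤ gamD a σ2 s := by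
  have := Real.Gamma_pos_of_pos ha
  unfold gamD; positivity

lemma gamD_meas (a : ℝ) : Measurable (fun p : ℝ × ℝ => gamD a p.1 p.2) := by
  unfold gamD; fun_prop

lemma gamD_integrable {a σ2 : ℝ} (ha : 0 < a) (hσ : 0 < σ2) :
    IntegrableOn (gamD a σ2) (Set.Ioi 0) := by
  have hr : 0 < a / σ2 := by positivity
  have h := Real.integral_rpow_mul_exp_neg_mul_Ioi ha hr
  have hG := Real.Gamma_pos_of_pos ha
  have hi : IntegrableOn (fun t : ℝ => t ^ (a - 1) * Real.exp (-((a / σ2) * t))) (Set.Ioi 0) := by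
    by_contra hc
    rw [integral_undef hc] at h
    have : 0 < (1 / (a / σ2)) ^ a * Real.Gamma a := by positivity
    linarith
  refine (hi.const_mul ((a / σ2) ^ a / Real.Gamma a)).congr (ae_of_all _ fun s => ?_)
  simp only [gamD]
  rw [mul_assoc]
  congr 3
  ring

lemma gamD_lint {a s : ℝ} (ha : 1 < a) (hs : 0 < s) :
    ∫⁻ σ2 in Set.Ioi (0 : ℝ), ENNReal.ofReal (gamD a σ2 s) = ENNReal.ofReal (a / (a - 1)) := by
  have ha0 : 0 < a := by linarith
  have ha1 : 0 < a - 1 := by linarith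
  have hr : 0 < a * s := by positivity
  have hG := Real.Gamma_pos_of_pos ha0
  have hG1 := Real.Gamma_pos_of_pos ha1
  have h := Real.integral_rpow_mul_exp_neg_mul_Ioi ha1 hr
  rw [← integral_comp_rpow_Ioi _ (by norm_num : (-1 : ℝ) ≠ 0)] at h
  have e : Set.EqOn (gamD a · s) (fun x : ℝ => (a ^ a / Real.Gamma a * s ^ (a - 1)) *
      ((|(-1 : ℝ)| * x ^ ((-1 : ℝ) - 1)) • ((x ^ (-1 : ℝ)) ^ (a - 1 - 1) *
        Real.exp (-(a * s * x ^ (-1 : ℝ)))))) (Set.Ioi 0) := by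
    intro x hx
    have hx' : 0 < x := hx
    simp only [gamD, smul_eq_mul, abs_neg, abs_one, one_mul]
    rw [← Real.rpow_mul hx'.le, Real.div_rpow ha0.le hx'.le, Real.rpow_neg_one]
    have : x ^ ((-1 : ℝ) - 1) * x ^ (-1 * (a - 1 - 1)) = (x ^ a)⁻¹ := by
      rw [← Real.rpow_add hx', ← Real.rpow_neg hx'.le]
      congr 1; ring
    rw [← mul_assoc (x ^ ((-1 : ℝ) - 1)), this]
    rw [show -(a * s) / x = -(a * s * x⁻¹) by ring]
    ring
  have hint : ∫ σ2 in Set.Ioi (0 : ℝ), gamD a σ2 s = a / (a - 1) := by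
    rw [setIntegral_congr_fun measurableSet_Ioi e, integral_const_mul, h]
    have hGa : Real.Gamma a = (a - 1) * Real.Gamma (a - 1) := by
      rw [← Real.Gamma_add_one ha1.ne']; congr 1; ring
    have haa : a ^ a = a ^ (a - 1) * a := by
      rw [← Real.rpow_add_one ha0.ne']; congr 1; ring
    rw [hGa, haa, Real.div_rpow zero_le_one hr.le, Real.one_rpow, Real.mul_rpow ha0.le hs.le]
    have : 0 < a ^ (a - 1) := by positivity
    have : 0 < s ^ (a - 1) := by positivity
    field_simp
  have hi : IntegrableOn (gamD a · s) (Set.Ioi 0) := by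
    by_contra hc
    rw [integral_undef hc] at hint
    have : 0 < a / (a - 1) := by positivity
    linarith
  rw [← hint, ofReal_integral_eq_lintegral_ofReal hi]
  filter_upwards [ae_restrict_mem measurableSet_Ioi] with x hx
  exact gamD_nonneg ha0 hx hs

lemma first_factor {n c σ2 : ℝ} (hn : 0 < n) (hc : 0 < c) (hσ : 0 < σ2) (m : ℝ) :
    ∫⁻ μ, ENNReal.ofReal (∫ y, lapD c m y * gauD n σ2 y μ) = 1 := by
  have h1 : ∀ μ, ENNReal.ofReal (∫ y, lapD c m y * gauD n σ2 y μ)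
      = ∫⁻ y, ENNReal.ofReal (lapD c m y) * ENNReal.ofReal (gauD n σ2 y μ) := by
    intro μ
    rw [ofReal_integral_eq_lintegral_ofReal]
    · simp_rw [ENNReal.ofReal_mul (lapD_pos hc m _).le]
    · refine (lapD_integrable hc m).mul_bdd (c := Real.sqrt (n / (2 * Real.pi * σ2)))
        ((gauD_cont n σ2).comp (by fun_prop : Continuous fun y : ℝ => (y, μ))).aestronglyMeasurable
        (ae_of_all _ fun y => ?_)
      change ‖gauD n σ2 y μ‖ ≤ _
      rw [Real.norm_of_nonneg (gauD_nonneg _ _ _ _)]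
      exact gauD_le hn hσ y μ
    · exact ae_of_all _ fun y => mul_nonneg (lapD_pos hc m y).le (gauD_nonneg _ _ _ _)
  simp_rw [h1]
  rw [lintegral_lintegral_swap]
  · have : ∀ y, ∫⁻ μ, ENNReal.ofReal (lapD c m y) * ENNReal.ofReal (gauD n σ2 y μ)
        = ENNReal.ofReal (lapD c m y) := by
      intro y
      rw [lintegral_const_mul' _ _ ENNReal.ofReal_ne_top, gauD_lint hn hσ, mul_one]
    simp_rw [this]
    rw [← ofReal_integral_eq_lintegral_ofReal (lapD_integrable hc m)
      (ae_of_all _ fun y => (lapD_pos hc m y).le), lapD_integral hc, ENNReal.ofReal_one]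
  · apply Measurable.aemeasurable
    have e1 : Measurable (fun p : ℝ × ℝ => lapD c m p.2) :=
      (lapD_cont c m).measurable.comp measurable_snd
    have e2 := (gauD_cont n σ2).measurable.comp (measurable_swap (α := ℝ) (β := ℝ))
    exact e1.ennreal_ofReal.mul e2.ennreal_ofReal

lemma second_factor {a c : ℝ} (ha : 1 < a) (hc : 0 < c) (m : ℝ) :
    ∫⁻ σ2 in Set.Ioi (0 : ℝ), ENNReal.ofReal (∫ s in Set.Ioi (0 : ℝ), lapD c m s * gamD a σ2 s)
     = ENNReal.ofReal (a / (a - 1) *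
        (1 / 2 + 1 / 2 * Real.sign m * (1 - Real.exp (-c * |m|)))) := by
  have ha0 : 0 < a := by linarith
  have ha1 : 0 < a - 1 := by linarith
  have h1 : Set.EqOn (fun σ2 => ENNReal.ofReal (∫ s in Set.Ioi (0 : ℝ), lapD c m s * gamD a σ2 s))
      (fun σ2 => ∫⁻ s in Set.Ioi (0 : ℝ),
        ENNReal.ofReal (lapD c m s) * ENNReal.ofReal (gamD a σ2 s)) (Set.Ioi 0) := by
    intro σ2 hσ
    simp only
    rw [ofReal_integral_eq_lintegral_ofReal]
    · simp_rw [ENNReal.ofReal_mul (lapD_pos hc m _).le]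
    · refine (gamD_integrable ha0 hσ).bdd_mul (c := c / 2)
        (lapD_cont c m).aestronglyMeasurable
        (ae_of_all _ fun y => ?_)
      rw [Real.norm_of_nonneg (lapD_pos hc m y).le]
      exact lapD_le hc m y
    · filter_upwards [ae_restrict_mem measurableSet_Ioi] with s hs
      exact mul_nonneg (lapD_pos hc m s).le (gamD_nonneg ha0 hσ hs)
  rw [setLIntegral_congr_fun measurableSet_Ioi h1]
  rw [lintegral_lintegral_swap]
  · have : Set.EqOn (fun s => ∫⁻ σ2 in Set.Ioi (0 : ℝ),
          ENNReal.ofReal (lapD c m s) * ENNReal.ofReal (gamD a σ2 s))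
        (fun s => ENNReal.ofReal (a / (a - 1)) * ENNReal.ofReal (lapD c m s)) (Set.Ioi 0) := by
      intro s hs
      simp only
      rw [lintegral_const_mul' _ _ ENNReal.ofReal_ne_top, gamD_lint ha hs, mul_comm]
    rw [setLIntegral_congr_fun measurableSet_Ioi this,
      lintegral_const_mul' _ _ ENNReal.ofReal_ne_top,
      ← ofReal_integral_eq_lintegral_ofReal (lapD_integrable hc m).integrableOn
      (ae_of_all _ fun y => (lapD_pos hc m y).le), lapD_Ioi_zero hc,
      ENNReal.ofReal_mul (by positivity)]
  · apply Measurable.aemeasurable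
    have e1 : Measurable (fun p : ℝ × ℝ => lapD c m p.2) :=
      (lapD_cont c m).measurable.comp measurable_snd
    exact e1.ennreal_ofReal.mul (gamD_meas a).ennreal_ofReal

theorem stmt_6 (n : ℕ) (hn : 3 < n) (ε₁ ε₂ : ℝ) (hε₁ : 0 < ε₁) (hε₂ : 0 < ε₂)
    (ybarStar s2Star : ℝ) (L : ℝ → ℝ → ℝ)
    (hL : ∀ μ σ2 : ℝ, 0 < σ2 → L μ σ2 =
      (∫ ybar : ℝ, (ε₁ * n / 2) * Real.exp (-(ε₁ * n) * |ybarStar - ybar|) *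
          (Real.sqrt ((n : ℝ) / (2 * Real.pi * σ2)) *
            Real.exp (-((n : ℝ) * (ybar - μ) ^ 2) / (2 * σ2)))) *
      (∫ s in Set.Ioi (0 : ℝ), (ε₂ * n / 2) * Real.exp (-(ε₂ * n) * |s2Star - s|) *
          (((((n : ℝ) - 1) / (2 * σ2)) ^ (((n : ℝ) - 1) / 2) / Real.Gamma (((n : ℝ) - 1) / 2)) *
            s ^ (((n : ℝ) - 1) / 2 - 1) * Real.exp (-(((n : ℝ) - 1) * s) / (2 * σ2))))) :
    (∫⁻ σ2 in Set.Ioi (0 : ℝ), ∫⁻ μ : ℝ, ENNReal.ofReal (L μ σ2))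
      = ENNReal.ofReal ((((n : ℝ) - 1) / ((n : ℝ) - 3)) *
          (1 / 2 + 1 / 2 * Real.sign s2Star * (1 - Real.exp (-(ε₂ * n) * |s2Star|)))) := by
  have hn' : (3 : ℝ) < n := by exact_mod_cast hn
  have hn0 : (0 : ℝ) < n := by linarith
  have key : Set.EqOn (fun σ2 => ∫⁻ μ : ℝ, ENNReal.ofReal (L μ σ2))
      (fun σ2 => ENNReal.ofReal (∫ s in Set.Ioi (0 : ℝ),
        lapD (ε₂ * n) s2Star s * gamD (((n : ℝ) - 1) / 2) σ2 s)) (Set.Ioi 0) := by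
    intro σ2 hσ
    have hσ' : 0 < σ2 := hσ
    have e : ∀ μ, ENNReal.ofReal (L μ σ2) =
        ENNReal.ofReal (∫ y, lapD (ε₁ * n) ybarStar y * gauD n σ2 y μ) *
        ENNReal.ofReal (∫ s in Set.Ioi (0 : ℝ),
          lapD (ε₂ * n) s2Star s * gamD (((n : ℝ) - 1) / 2) σ2 s) := by
      intro μ
      rw [← ENNReal.ofReal_mul (integral_nonneg fun y =>
        mul_nonneg (lapD_pos (by positivity) _ y).le (gauD_nonneg _ _ _ _)), hL μ σ2 hσ']
      simp only [lapD, gauD, gamD, div_div]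
      congr 3
      ext s
      congr 3
      ring
    simp only
    simp_rw [e]
    rw [lintegral_mul_const' _ _ ENNReal.ofReal_ne_top,
      first_factor hn0 (by positivity) hσ', one_mul]
  rw [setLIntegral_congr_fun measurableSet_Ioi key,
    second_factor (by linarith) (by positivity)]
  congr 2
  have h3 : (n : ℝ) - 3 ≠ 0 := by linarith
  have h4 : ((n : ℝ) - 1) / 2 - 1 ≠ 0 := by linarith
  rw [div_eq_div_iff h4 h3]
  ring
end

section
/- Let α > 0, β > λ ≥ 0, and τ > 0. Then ∫_0^∞ (λ/2)e^{−λ|τ − μ|} · (β^α/Γ(α)) μ^{α−1} e^{−βμ} dμ = (λβ^α/(2Γ(α))) · [ e^{−λτ} · γ(α, (β − λ)τ)/(β − λ)^α + e^{λτ} · Γ(α, (β + λ)τ)/(β + λ)^α ], where γ(α, x) = ∫_0^x u^{α−1}e^{−u} du is the lower incomplete Gamma function and Γ(α, x) = ∫_x^∞ u^{α−1}e^{−u} du is the upper incomplete Gamma function. -/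
open MeasureTheory

lemma aux_scale (α b μ : ℝ) (hb : 0 < b) (hμ : 0 < μ) :
    μ ^ (α - 1) * Real.exp (-(b * μ)) =
      b / b ^ α * ((b * μ) ^ (α - 1) * Real.exp (-(b * μ))) := by
  have h : b ^ α ≠ 0 := (Real.rpow_pos_of_pos hb α).ne'
  rw [Real.mul_rpow hb.le hμ.le, Real.rpow_sub_one hb.ne' α]
  field_simp

theorem stmt_10 (α β lam τ : ℝ) (hα : 0 < α) (hlam : 0 ≤ lam) (hβ : lam < β) (hτ : 0 < τ) :
    ∫ μ in Set.Ioi (0 : ℝ),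
        (lam / 2) * Real.exp (-lam * |τ - μ|) *
          ((β ^ α / Real.Gamma α) * μ ^ (α - 1) * Real.exp (-β * μ))
      = lam * β ^ α / (2 * Real.Gamma α) *
        (Real.exp (-lam * τ) *
            (∫ u in (0 : ℝ)..((β - lam) * τ), u ^ (α - 1) * Real.exp (-u)) / (β - lam) ^ α +
          Real.exp (lam * τ) *
            (∫ u in Set.Ioi ((β + lam) * τ), u ^ (α - 1) * Real.exp (-u)) / (β + lam) ^ α) := by
  have hb : 0 < β - lam := by linarith
  have hd : 0 < β + lam := by linarith
  have hint : IntegrableOn (fun u : ℝ => u ^ (α - 1) * Real.exp (-u)) (Set.Ioi 0) := by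
    simpa only [mul_comm] using Real.GammaIntegral_convergent hα
  have hintc : ∀ c : ℝ, 0 < c →
      IntegrableOn (fun u : ℝ => (c * u) ^ (α - 1) * Real.exp (-(c * u))) (Set.Ioi 0) := by
    intro c hc
    refine (integrableOn_Ioi_comp_mul_left_iff
      (fun u : ℝ => u ^ (α - 1) * Real.exp (-u)) 0 hc).2 ?_
    simpa using hint
  have e1 : Set.EqOn (fun μ : ℝ => (lam / 2) * Real.exp (-lam * |τ - μ|) *
          ((β ^ α / Real.Gamma α) * μ ^ (α - 1) * Real.exp (-β * μ)))
      (fun μ => (lam * β ^ α / (2 * Real.Gamma α) * Real.exp (-lam * τ) *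
        ((β - lam) / (β - lam) ^ α)) *
        (((β - lam) * μ) ^ (α - 1) * Real.exp (-((β - lam) * μ)))) (Set.Ioc 0 τ) := by
    intro μ hμ
    have h := aux_scale α (β - lam) μ hb hμ.1
    have he : Real.exp (-lam * |τ - μ|) * Real.exp (-β * μ)
        = Real.exp (-lam * τ) * Real.exp (-((β - lam) * μ)) := by
      rw [abs_of_nonneg (by linarith [hμ.2]), ← Real.exp_add, ← Real.exp_add]
      congr 1; ring
    have hG : Real.Gamma α ≠ 0 := (Real.Gamma_pos_of_pos hα).ne'
    calc _ = lam * β ^ α / (2 * Real.Gamma α) * μ ^ (α - 1) *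
            (Real.exp (-lam * |τ - μ|) * Real.exp (-β * μ)) := by field_simp
      _ = lam * β ^ α / (2 * Real.Gamma α) * Real.exp (-lam * τ) *
            (μ ^ (α - 1) * Real.exp (-((β - lam) * μ))) := by rw [he]; ring
      _ = _ := by rw [h]; ring
  have e2 : Set.EqOn (fun μ : ℝ => (lam / 2) * Real.exp (-lam * |τ - μ|) *
          ((β ^ α / Real.Gamma α) * μ ^ (α - 1) * Real.exp (-β * μ)))
      (fun μ => (lam * β ^ α / (2 * Real.Gamma α) * Real.exp (lam * τ) *
        ((β + lam) / (β + lam) ^ α)) *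
        (((β + lam) * μ) ^ (α - 1) * Real.exp (-((β + lam) * μ)))) (Set.Ioi τ) := by
    intro μ hμ
    have hμ' : τ < μ := hμ
    have h := aux_scale α (β + lam) μ hd (hτ.trans hμ')
    have he : Real.exp (-lam * |τ - μ|) * Real.exp (-β * μ)
        = Real.exp (lam * τ) * Real.exp (-((β + lam) * μ)) := by
      rw [abs_of_nonpos (by linarith), ← Real.exp_add, ← Real.exp_add]
      congr 1; ring
    have hG : Real.Gamma α ≠ 0 := (Real.Gamma_pos_of_pos hα).ne'
    calc _ = lam * β ^ α / (2 * Real.Gamma α) * μ ^ (α - 1) *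
            (Real.exp (-lam * |τ - μ|) * Real.exp (-β * μ)) := by field_simp
      _ = lam * β ^ α / (2 * Real.Gamma α) * Real.exp (lam * τ) *
            (μ ^ (α - 1) * Real.exp (-((β + lam) * μ))) := by rw [he]; ring
      _ = _ := by rw [h]; ring
  rw [← Set.Ioc_union_Ioi_eq_Ioi hτ.le, setIntegral_union Set.Ioc_disjoint_Ioi_same
    measurableSet_Ioi, setIntegral_congr_fun measurableSet_Ioc e1,
    setIntegral_congr_fun measurableSet_Ioi e2, integral_const_mul, integral_const_mul,
    integral_comp_mul_left_Ioi (fun u : ℝ => u ^ (α - 1) * Real.exp (-u)) τ hd,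
    ← intervalIntegral.integral_of_le hτ.le,
    intervalIntegral.integral_comp_mul_left (fun u : ℝ => u ^ (α - 1) * Real.exp (-u)) hb.ne']
  · have h1 : (β - lam) ^ α ≠ 0 := (Real.rpow_pos_of_pos hb α).ne'
    have h2 : (β + lam) ^ α ≠ 0 := (Real.rpow_pos_of_pos hd α).ne'
    have hG : Real.Gamma α ≠ 0 := (Real.Gamma_pos_of_pos hα).ne'
    have hb' := hb.ne'
    have hd' := hd.ne'
    simp only [smul_eq_mul, mul_zero]
    field_simp
  · refine IntegrableOn.congr_fun ?_ e1.symm measurableSet_Ioc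
    exact ((hintc _ hb).mono_set Set.Ioc_subset_Ioi_self).const_mul _
  · refine IntegrableOn.congr_fun ?_ e2.symm measurableSet_Ioi
    exact ((hintc _ hd).mono_set (Set.Ioi_subset_Ioi hτ.le)).const_mul _
end
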